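/- There is an absolute constant c > 0 such that for every ε > 0, every integer k ≥ 2, and every k-GSCB integer function w (that is, w : {0,1,…,k} → ℝ≥0 with 2·w(i) ≥ w(i−1) + w(i+1) for all i ∈ {1,…,k−1}; no symmetry and no vanishing at the endpoints is assumed), there exist z_0, z_k ≥ 0, an integer J ≤ c·(1 + log_{1+ε} k), and parameters a_j > 0 (j = 1,…,J) with 0 < b_1 < … < b_J < k, such that the k-CG function ŵ(i) = z_0·(k−i) + z_k·i + Σ_{j=1}^J a_j·min(i·(k−b_j), (k−i)·b_j) satisfies w(i) ≤ ŵ(i) ≤ (1+ε)·w(i) for all i ∈ {0,1,…,k}. -/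

import Mathlib

/-!
Linear interpolation between the endpoint values plus `∑ b, (-Δ²w) b / k * gadget k b` recovers a
sequence `w` exactly, and for a concave `w` all the coefficients are nonnegative. A gadget changes
little when its breakpoint `b` is moved: rounding `b` down to `p` and rescaling by `b / p` loses at
most the ratio of the odds `b / (k - b)` and `p / (k - p)`. Rounding the odds down to a power of
`1 + ε` therefore costs a factor `1 + ε`, and as the odds of `1, …, k - 1` lie in `[1 / k, k]`,
only `O(1 + log_{1+ε} k)` distinct breakpoints survive.
-/

/-- The `k`-CG function of order `J` with parameters `z0, zk, a, b`, modeling a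
combination of `J` asymmetric cardinality-based gadgets plus source/sink edges. -/
noncomputable def cgFun (k : ℕ) (z0 zk : ℝ) (J : ℕ) (a b : ℕ → ℝ) (i : ℕ) : ℝ :=
  z0 * ((k : ℝ) - (i : ℝ)) + zk * (i : ℝ)
    + ∑ j ∈ Finset.Icc 1 J, a j * min ((i : ℝ) * ((k : ℝ) - b j)) (((k : ℝ) - (i : ℝ)) * b j)

open Finset

section Gadgets

/-- The asymmetric cardinality-based gadget with breakpoint `b`, as a function of `x ∈ [0, k]`: the
concave piecewise linear function which vanishes at `0` and `k` and peaks at `b`. -/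
noncomputable def gadget (k b x : ℝ) : ℝ := min (x * (k - b)) ((k - x) * b)

variable {k b p x : ℝ}

lemma gadget_nonneg (hb : 0 ≤ b) (hbk : b ≤ k) (hx : 0 ≤ x) (hxk : x ≤ k) : 0 ≤ gadget k b x :=
  le_min (mul_nonneg hx (sub_nonneg.2 hbk)) (mul_nonneg (sub_nonneg.2 hxk) hb)

lemma gadget_of_le (hk : 0 ≤ k) (h : x ≤ b) : gadget k b x = x * (k - b) :=
  min_eq_left (by nlinarith)

lemma gadget_of_ge (hk : 0 ≤ k) (h : b ≤ x) : gadget k b x = (k - x) * b :=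
  min_eq_right (by nlinarith)

lemma gadget_reflect (k b x : ℝ) : gadget k (k - b) (k - x) = gadget k b x := by
  simp only [gadget, sub_sub_cancel, min_comm]

lemma mul_gadget_le_mul_gadget (hk : 0 ≤ k) (hp : 0 ≤ p) (hpb : p ≤ b) (hx : 0 ≤ x) :
    p * gadget k b x ≤ b * gadget k p x := by
  rw [gadget, gadget, mul_min_of_nonneg _ _ hp, mul_min_of_nonneg _ _ (hp.trans hpb)]
  refine min_le_min ?_ (by linarith)
  have : x * (k * p) ≤ x * (k * b) := by gcongr
  linarith

lemma sub_mul_gadget_le_sub_mul_gadget (hk : 0 ≤ k) (hbk : b ≤ k) (hpb : p ≤ b) (hxk : x ≤ k) :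
    (k - b) * gadget k p x ≤ (k - p) * gadget k b x := by
  simpa only [gadget_reflect] using
    mul_gadget_le_mul_gadget hk (sub_nonneg.2 hbk) (sub_le_sub_left hpb k) (sub_nonneg.2 hxk)

lemma gadget_le_div_mul_gadget (hk : 0 ≤ k) (hp : 0 < p) (hpb : p ≤ b) (hx : 0 ≤ x) :
    gadget k b x ≤ b / p * gadget k p x := by
  rw [div_mul_eq_mul_div, le_div_iff₀' hp]
  exact mul_gadget_le_mul_gadget hk hp.le hpb hx

end Gadgets

section SecondDifference

/-- The negated discrete second derivative `-Δ²w`, centred at `b`. It is meant for `b ≥ 1`; at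
`b = 0` truncated subtraction replaces `w (-1)` by `w 0`. -/
def negSecondDiff {R : Type*} [Ring R] (w : ℕ → R) (b : ℕ) : R :=
  2 * w b - w (b - 1) - w (b + 1)

lemma negSecondDiff_nonneg {R : Type*} [Ring R] [PartialOrder R] [IsOrderedAddMonoid R]
    {w : ℕ → R} {b : ℕ} (h : w (b - 1) + w (b + 1) ≤ 2 * w b) : 0 ≤ negSecondDiff w b := by
  rwa [negSecondDiff, sub_sub, sub_nonneg]

lemma sum_Ico_sub_mul_negSecondDiff {R : Type*} [CommRing R] (w : ℕ → R) (c : R) {m n : ℕ}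
    (hmn : m ≤ n) :
    ∑ b ∈ Ico m n, (c - b) * negSecondDiff w b =
      ((c - n) * w (n - 1) - (c - n + 1) * w n) - ((c - m) * w (m - 1) - (c - m + 1) * w m) := by
  induction n, hmn using Nat.le_induction with
  | base => simp
  | succ n hmn ih =>
    rw [sum_Ico_succ_top hmn, ih, negSecondDiff, Nat.add_sub_cancel]
    push_cast
    ring

lemma sum_negSecondDiff_mul_gadget (w : ℕ → ℝ) {i k : ℕ} (hik : i ≤ k) :
    ∑ b ∈ Ico 1 k, negSecondDiff w b * gadget k b i = k * w i - (k - i) * w 0 - i * w k := by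
  have hk : (0 : ℝ) ≤ k := k.cast_nonneg
  obtain rfl | hi : i = 0 ∨ 1 ≤ i := by omega
  · have h_zero (b : ℕ) : gadget k b 0 = 0 := by
      rw [gadget_of_le hk b.cast_nonneg, zero_mul]
    simp [h_zero]
  have h_left : ∑ b ∈ Ico 1 i, negSecondDiff w b * gadget k b i =
      -(k - i) * ∑ b ∈ Ico 1 i, (0 - b) * negSecondDiff w b := by
    rw [mul_sum]
    refine sum_congr rfl fun b hb => ?_
    rw [gadget_of_ge hk (Nat.cast_le.2 (mem_Ico.1 hb).2.le)]
    ring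
  have h_right : ∑ b ∈ Ico i k, negSecondDiff w b * gadget k b i =
      i * ∑ b ∈ Ico i k, (k - b) * negSecondDiff w b := by
    rw [mul_sum]
    refine sum_congr rfl fun b hb => ?_
    rw [gadget_of_le hk (Nat.cast_le.2 (mem_Ico.1 hb).1)]
    ring
  rw [← sum_Ico_consecutive _ hi hik, h_left, h_right, sum_Ico_sub_mul_negSecondDiff w _ hi,
    sum_Ico_sub_mul_negSecondDiff w _ hik]
  push_cast
  ring

lemma eq_linear_add_sum_gadget (w : ℕ → ℝ) {i k : ℕ} (hk : k ≠ 0) (hik : i ≤ k) :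
    w i = w 0 / k * (k - i) + w k / k * i +
      ∑ b ∈ Ico 1 k, negSecondDiff w b / k * gadget k b i := by
  have hk' : (k : ℝ) ≠ 0 := Nat.cast_ne_zero.2 hk
  simp only [div_mul_eq_mul_div]
  rw [← sum_div, sum_negSecondDiff_mul_gadget w hik]
  field_simp
  ring

end SecondDifference

section Rounding

/-- The odds `b : (k - b)` of a breakpoint `b ∈ (0, k)`, the scale on which breakpoints are
rounded. -/
noncomputable def odds (k b : ℝ) : ℝ := b / (k - b)

/-- The breakpoint in `(0, k)` with odds `t`. -/
noncomputable def ofOdds (k t : ℝ) : ℝ := k * t / (1 + t)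

/-- The breakpoint `b`, with its odds rounded down to an integer power of `r`. -/
noncomputable def roundBreakpoint (r k b : ℝ) : ℝ := ofOdds k (r ^ ⌊Real.logb r (odds k b)⌋)

variable {r k b p t u x : ℝ}

lemma odds_pos (hb : 0 < b) (hbk : b < k) : 0 < odds k b := div_pos hb (sub_pos.2 hbk)

lemma ofOdds_mem_Ioo (hk : 0 < k) (ht : 0 < t) : ofOdds k t ∈ Set.Ioo 0 k := by
  refine ⟨by unfold ofOdds; positivity, ?_⟩
  rw [ofOdds, div_lt_iff₀ (by positivity)]
  linarith

lemma ofOdds_le_iff (ht : 0 < t) (hbk : b < k) : ofOdds k t ≤ b ↔ t ≤ odds k b := by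
  rw [ofOdds, odds, div_le_iff₀ (by positivity), le_div_iff₀ (sub_pos.2 hbk)]
  constructor <;> intro h <;> linarith

lemma odds_ofOdds (hk : k ≠ 0) (ht : 1 + t ≠ 0) : odds k (ofOdds k t) = t := by
  have h_sub : k - ofOdds k t = k / (1 + t) := by
    rw [ofOdds]
    field_simp
    ring
  rw [odds, h_sub, ofOdds]
  field_simp

lemma zpow_floor_logb_le (hr : 1 < r) (hu : 0 < u) : r ^ ⌊Real.logb r u⌋ ≤ u := by
  rw [← Real.rpow_intCast, ← Real.le_logb_iff_rpow_le hr hu]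
  exact Int.floor_le _

lemma le_mul_zpow_floor_logb (hr : 1 < r) (hu : 0 < u) : u ≤ r * r ^ ⌊Real.logb r u⌋ := by
  rw [← zpow_one_add₀ (by positivity), ← Real.rpow_intCast, ← Real.logb_le_iff_le_rpow hr hu]
  push_cast
  rw [add_comm]
  exact (Int.lt_floor_add_one _).le

lemma roundBreakpoint_mem_Ioo (hr : 0 < r) (hk : 0 < k) : roundBreakpoint r k b ∈ Set.Ioo 0 k :=
  ofOdds_mem_Ioo hk (zpow_pos hr _)

lemma roundBreakpoint_le (hr : 1 < r) (hb : 0 < b) (hbk : b < k) : roundBreakpoint r k b ≤ b :=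
  (ofOdds_le_iff (by positivity) hbk).2 (zpow_floor_logb_le hr (odds_pos hb hbk))

lemma odds_le_mul_odds_roundBreakpoint (hr : 1 < r) (hb : 0 < b) (hbk : b < k) :
    odds k b ≤ r * odds k (roundBreakpoint r k b) := by
  rw [roundBreakpoint, odds_ofOdds (hb.trans hbk).ne' (by positivity)]
  exact le_mul_zpow_floor_logb hr (odds_pos hb hbk)

lemma div_mul_gadget_le (hp : 0 < p) (hpb : p ≤ b) (hbk : b < k) (h_odds : odds k b ≤ r * odds k p)
    (hx : 0 ≤ x) (hxk : x ≤ k) : b / p * gadget k p x ≤ r * gadget k b x := by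
  have hb : 0 < b := hp.trans_le hpb
  have hpk : 0 < k - p := sub_pos.2 (hpb.trans_lt hbk)
  have hbk' : 0 < k - b := sub_pos.2 hbk
  calc b / p * gadget k p x
      ≤ b / p * ((k - p) / (k - b) * gadget k b x) := by
        gcongr
        rw [div_mul_eq_mul_div, le_div_iff₀' hbk']
        exact sub_mul_gadget_le_sub_mul_gadget (hb.trans hbk).le hbk.le hpb hxk
    _ = odds k b / odds k p * gadget k b x := by
        unfold odds
        field_simp
    _ ≤ r * gadget k b x := by
        gcongr
        · exact gadget_nonneg hb.le hbk.le hx hxk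
        · exact (div_le_iff₀ (odds_pos hp (sub_pos.1 hpk))).2 h_odds

lemma gadget_roundBreakpoint_sandwich (hr : 1 < r) (hb : 0 < b) (hbk : b < k) (hx : 0 ≤ x)
    (hxk : x ≤ k) :
    gadget k b x ≤ b / roundBreakpoint r k b * gadget k (roundBreakpoint r k b) x ∧
      b / roundBreakpoint r k b * gadget k (roundBreakpoint r k b) x ≤ r * gadget k b x := by
  have hk : 0 < k := hb.trans hbk
  have hp : 0 < roundBreakpoint r k b := (roundBreakpoint_mem_Ioo (by positivity) hk).1
  have hpb : roundBreakpoint r k b ≤ b := roundBreakpoint_le hr hb hbk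
  exact ⟨gadget_le_div_mul_gadget hk.le hp hpb hx,
    div_mul_gadget_le hp hpb hbk (odds_le_mul_odds_roundBreakpoint hr hb hbk) hx hxk⟩

end Rounding

section Counting

lemma card_image_floor_le {ι R : Type*} [CommRing R] [LinearOrder R] [IsStrictOrderedRing R]
    [FloorRing R] {s : Finset ι} {f : ι → R} {x y : R} (hxy : x ≤ y)
    (hf : ∀ i ∈ s, f i ∈ Set.Icc x y) : (#(s.image fun i => ⌊f i⌋) : R) ≤ y - x + 2 := by
  have h_sub : s.image (fun i => ⌊f i⌋) ⊆ Icc ⌊x⌋ ⌊y⌋ := image_subset_iff.2 fun i hi =>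
    mem_Icc.2 ⟨Int.floor_le_floor (hf i hi).1, Int.floor_le_floor (hf i hi).2⟩
  have h_card : (#(Icc ⌊x⌋ ⌊y⌋) : R) = ⌊y⌋ + 1 - ⌊x⌋ := by
    exact_mod_cast Int.card_Icc_of_le _ _ (by linarith [Int.floor_le_floor hxy])
  calc (#(s.image fun i => ⌊f i⌋) : R)
      ≤ ⌊y⌋ + 1 - ⌊x⌋ := h_card ▸ mod_cast card_le_card h_sub
    _ ≤ y - x + 2 := by linarith [Int.floor_le y, Int.lt_floor_add_one x]

lemma logb_odds_mem_Icc {r : ℝ} (hr : 1 < r) {k b : ℕ} (hb : b ∈ Ico 1 k) :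
    Real.logb r (odds k b) ∈ Set.Icc (-Real.logb r k) (Real.logb r k) := by
  have hb1 : (1 : ℝ) ≤ b := mod_cast (mem_Ico.1 hb).1
  have hbk : (b : ℝ) + 1 ≤ k := mod_cast (mem_Ico.1 hb).2
  have hk : (0 : ℝ) < k := by linarith
  rw [odds, ← Real.logb_inv]
  constructor <;> apply Real.logb_le_logb_of_le hr
  · positivity
  · rw [le_div_iff₀ (by linarith), inv_mul_le_iff₀ hk]
    nlinarith
  · exact div_pos (by linarith) (by linarith)
  · rw [div_le_iff₀ (by linarith)]
    nlinarith

lemma card_image_roundBreakpoint_le {r : ℝ} (hr : 1 < r) {k : ℕ} (hk : 1 ≤ k) :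
    (#((Ico 1 k).image fun b : ℕ => roundBreakpoint r k b) : ℝ) ≤ 2 * (1 + Real.logb r k) := by
  have h_log : 0 ≤ Real.logb r k := Real.logb_nonneg hr (mod_cast hk)
  have h_image : (Ico 1 k).image (fun b : ℕ => roundBreakpoint r k b) =
      ((Ico 1 k).image fun b : ℕ => ⌊Real.logb r (odds k b)⌋).image fun m => ofOdds k (r ^ m) := by
    rw [image_image]
    rfl
  calc (#((Ico 1 k).image fun b : ℕ => roundBreakpoint r k b) : ℝ)
      ≤ #((Ico 1 k).image fun b : ℕ => ⌊Real.logb r (odds k b)⌋) := by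
        rw [h_image]
        exact mod_cast card_image_le
    _ ≤ Real.logb r k - -Real.logb r k + 2 :=
        card_image_floor_le (by linarith) fun _ => logb_odds_mem_Icc hr
    _ = 2 * (1 + Real.logb r k) := by ring

end Counting

section Assembly

lemma exists_strictMonoOn_image_eq {α β : Type*} [LinearOrder α] [LinearOrder β] [Nonempty β]
    {s : Finset α} {t : Finset β} (h : #s = #t) :
    ∃ f : α → β, StrictMonoOn f s ∧ s.image f = t := by
  let e : s ≃o t := (s.orderIsoOfFin h).symm.trans (t.orderIsoOfFin rfl)
  let f : α → β := Function.extend Subtype.val (fun i => (e i : β)) fun _ => Classical.arbitrary β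
  have hf (i : s) : f i = e i := Subtype.val_injective.extend_apply _ _ i
  refine ⟨f, fun i hi j hj hij => ?_, ?_⟩
  · rw [hf ⟨i, hi⟩, hf ⟨j, hj⟩]
    exact e.strictMono hij
  · ext y
    rw [mem_image]
    constructor
    · rintro ⟨i, hi, rfl⟩
      exact hf ⟨i, hi⟩ ▸ (e ⟨i, hi⟩).2
    · intro hy
      exact ⟨e.symm ⟨y, hy⟩, (e.symm ⟨y, hy⟩).2, by rw [hf, e.apply_symm_apply]⟩

lemma exists_cgFun_eq_sum_finset {k : ℕ} {P : Finset ℝ} {A : ℝ → ℝ}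
    (hP : ∀ q ∈ P, 0 < q ∧ q < k) (hA : ∀ q ∈ P, 0 < A q) :
    ∃ a b : ℕ → ℝ,
      (∀ j, 1 ≤ j → j ≤ #P → 0 < a j) ∧
      (∀ j, 1 ≤ j → j ≤ #P → 0 < b j ∧ b j < k) ∧
      (∀ j, 1 ≤ j → j < #P → b j < b (j + 1)) ∧
      ∀ z0 zk i, cgFun k z0 zk #P a b i =
        z0 * (k - i) + zk * i + ∑ q ∈ P, A q * gadget k q i := by
  obtain ⟨b, hb_mono, hb_image⟩ :=
    exists_strictMonoOn_image_eq (s := Icc 1 #P) (t := P) (by simp)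
  have hb_mem (j : ℕ) (h1 : 1 ≤ j) (hj : j ≤ #P) : b j ∈ P :=
    hb_image ▸ mem_image_of_mem b (mem_Icc.2 ⟨h1, hj⟩)
  refine ⟨A ∘ b, b, fun j h1 hj => hA _ (hb_mem j h1 hj), fun j h1 hj => hP _ (hb_mem j h1 hj),
    fun j h1 hj => hb_mono (mem_coe.2 (mem_Icc.2 ⟨h1, hj.le⟩))
      (mem_coe.2 (mem_Icc.2 ⟨by omega, hj⟩)) j.lt_succ_self, fun z0 zk i => ?_⟩
  have h_sum : ∑ q ∈ P, A q * gadget k q i = ∑ j ∈ Icc 1 #P, A (b j) * gadget k (b j) i := by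
    conv_lhs => rw [← hb_image]
    exact sum_image hb_mono.injOn
  rw [h_sum]
  rfl

lemma exists_cgFun_eq_sum {ι : Type*} {k : ℕ} {s : Finset ι} {p c : ι → ℝ}
    (hp : ∀ m ∈ s, 0 < p m ∧ p m < k) (hc : ∀ m ∈ s, 0 ≤ c m) :
    ∃ (J : ℕ) (a b : ℕ → ℝ),
      J ≤ #(s.image p) ∧
      (∀ j, 1 ≤ j → j ≤ J → 0 < a j) ∧
      (∀ j, 1 ≤ j → j ≤ J → 0 < b j ∧ b j < k) ∧
      (∀ j, 1 ≤ j → j < J → b j < b (j + 1)) ∧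
      ∀ z0 zk i, cgFun k z0 zk J a b i =
        z0 * (k - i) + zk * i + ∑ m ∈ s, c m * gadget k (p m) i := by
  let A (q : ℝ) : ℝ := ∑ m ∈ s with p m = q, c m
  let P : Finset ℝ := {q ∈ s.image p | 0 < A q}
  have hA (q : ℝ) : 0 ≤ A q := sum_nonneg fun m hm => hc m (mem_filter.1 hm).1
  have hP : ∀ q ∈ P, 0 < q ∧ q < k := fun q hq => by
    obtain ⟨m, hm, rfl⟩ := mem_image.1 (mem_filter.1 hq).1
    exact hp m hm
  obtain ⟨a, b, ha, hb, hb_mono, h_eq⟩ :=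
    exists_cgFun_eq_sum_finset hP fun q hq => (mem_filter.1 hq).2
  refine ⟨#P, a, b, card_filter_le _ _, ha, hb, hb_mono, fun z0 zk i => ?_⟩
  have h_drop : ∑ q ∈ P, A q * gadget k q i = ∑ q ∈ s.image p, A q * gadget k q i :=
    sum_filter_of_ne fun q _ hq => (hA q).lt_of_ne' (left_ne_zero_of_mul hq)
  have h_regroup : ∑ q ∈ s.image p, A q * gadget k q i = ∑ m ∈ s, c m * gadget k (p m) i := by
    rw [← sum_fiberwise_of_maps_to fun m hm => mem_image_of_mem p hm]
    refine sum_congr rfl fun q _ => ?_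
    rw [sum_mul]
    exact sum_congr rfl fun m hm => by rw [(mem_filter.1 hm).2]
  rw [h_eq, h_drop, h_regroup]

lemma add_sum_sandwich {ι R : Type*} [CommRing R] [PartialOrder R] [IsOrderedRing R]
    {s : Finset ι} {l r : R} {c f g : ι → R} (hl : 0 ≤ l) (hr : 1 ≤ r)
    (hc : ∀ m ∈ s, 0 ≤ c m) (hfg : ∀ m ∈ s, f m ≤ g m ∧ g m ≤ r * f m) :
    l + ∑ m ∈ s, c m * f m ≤ l + ∑ m ∈ s, c m * g m ∧
      l + ∑ m ∈ s, c m * g m ≤ r * (l + ∑ m ∈ s, c m * f m) := by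
  refine ⟨?_, ?_⟩
  · gcongr with m hm
    exacts [hc m hm, (hfg m hm).1]
  · rw [mul_add, mul_sum]
    refine add_le_add (le_mul_of_one_le_left hl hr) (sum_le_sum fun m hm => ?_)
    rw [mul_left_comm]
    exact mul_le_mul_of_nonneg_left (hfg m hm).2 (hc m hm)

end Assembly

/-- **Sparse approximation of generalized SCB functions (Lemma B.5).** There is an
absolute constant `c > 0` such that for every `ε > 0`, every integer `k ≥ 2`, and every
`k`-GSCB integer function `w` (i.e. `w : {0,…,k} → ℝ≥0` with `2w(i) ≥ w(i-1) + w(i+1)`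
for `1 ≤ i ≤ k-1`; no symmetry and no vanishing at the endpoints assumed), there exist
`z₀, z_k ≥ 0`, an order `J ≤ c·(1 + log_{1+ε} k)`, and parameters `a_j > 0`,
`0 < b_1 < … < b_J < k` such that the corresponding `k`-CG function `ŵ` satisfies
`w(i) ≤ ŵ(i) ≤ (1+ε)·w(i)` for all `i ∈ {0,…,k}`. -/
theorem gscb_sparse_cg_approximation :
    ∃ c : ℝ, 0 < c ∧
      ∀ ε : ℝ, 0 < ε → ∀ k : ℕ, 2 ≤ k → ∀ w : ℕ → ℝ,
        (∀ i ≤ k, 0 ≤ w i) →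
        (∀ i, 1 ≤ i → i + 1 ≤ k → w (i - 1) + w (i + 1) ≤ 2 * w i) →
        ∃ (z0 zk : ℝ) (J : ℕ) (a b : ℕ → ℝ),
          0 ≤ z0 ∧ 0 ≤ zk ∧
          (J : ℝ) ≤ c * (1 + Real.logb (1 + ε) (k : ℝ)) ∧
          (∀ j, 1 ≤ j → j ≤ J → 0 < a j) ∧
          (∀ j, 1 ≤ j → j ≤ J → 0 < b j ∧ b j < k) ∧
          (∀ j, 1 ≤ j → j < J → b j < b (j + 1)) ∧
          ∀ i ≤ k, w i ≤ cgFun k z0 zk J a b i ∧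
            cgFun k z0 zk J a b i ≤ (1 + ε) * w i := by
  refine ⟨2, two_pos, fun ε hε k hk w hw hconc => ?_⟩
  have hr : 1 < 1 + ε := by linarith
  have hk0 : (0 : ℝ) < k := by positivity
  have h_mem {m : ℕ} (hm : m ∈ Ico 1 k) : (0 : ℝ) < m ∧ (m : ℝ) < k := mod_cast mem_Ico.1 hm
  let p (m : ℕ) : ℝ := roundBreakpoint (1 + ε) k m
  have hp (m : ℕ) : p m ∈ Set.Ioo 0 (k : ℝ) := roundBreakpoint_mem_Ioo (by positivity) hk0
  have h_coeff : ∀ m ∈ Ico 1 k, 0 ≤ negSecondDiff w m / k := fun m hm =>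
    div_nonneg (negSecondDiff_nonneg (hconc m (mem_Ico.1 hm).1 (mem_Ico.1 hm).2)) hk0.le
  obtain ⟨J, a, b, hJ, ha, hb, hb_mono, h_cg⟩ :=
    exists_cgFun_eq_sum (fun m _ => hp m)
      (fun m hm => mul_nonneg (h_coeff m hm) (div_nonneg m.cast_nonneg (hp m).1.le))
  have hz0 : 0 ≤ w 0 / k := div_nonneg (hw 0 k.zero_le) hk0.le
  have hzk : 0 ≤ w k / k := div_nonneg (hw k le_rfl) hk0.le
  refine ⟨w 0 / k, w k / k, J, a, b, hz0, hzk, (Nat.cast_le.2 hJ).trans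
    (card_image_roundBreakpoint_le hr (by omega)), ha, hb, hb_mono, fun i hi => ?_⟩
  have hik : (0 : ℝ) ≤ k - i := sub_nonneg.2 (mod_cast hi)
  rw [h_cg, eq_linear_add_sum_gadget w (by omega) hi]
  simp only [mul_assoc (_ / (k : ℝ))]
  exact add_sum_sandwich (by positivity) hr.le h_coeff fun m hm =>
    gadget_roundBreakpoint_sandwich hr (h_mem hm).1 (h_mem hm).2 i.cast_nonneg (sub_nonneg.1 hik)
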